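/- Let L be a symmetric positive-definite n×n real matrix whose smallest eigenvalue is ℓ > 0. Let x, ξ, d, F : ℝ → ℝⁿ with x, ξ, d differentiable, x'(t) = F(t) + d(t), ξ'(t) = −L(ξ(t) + L x(t) + F(t)), and d̂ = L x + ξ. If ‖d'(t)‖ ≤ D for all t ≥ 0, then for all t ≥ 0, ‖d̂(t) − d(t)‖ ≤ e^{−ℓ t} ‖d̂(0) − d(0)‖ + (D/ℓ)(1 − e^{−ℓ t}). -/

import Mathlib

open Matrix

/-!
Adding `(L x)' = L (F + d)` to `ξ' = -L (d̂ + F)` shows that the error `e = d̂ - d` satisfies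
`e' = -L e - d'`. Hence `⟪e, e'⟫ ≤ -ℓ ‖e‖² + D ‖e‖`: formally `‖e‖' ≤ -ℓ ‖e‖ + D`, and Grönwall's
inequality with the negative rate `-ℓ` gives the bound. Since `‖e‖` need not be differentiable
where `e` vanishes, one compares `‖e‖²` with the square of a strictly positive supersolution of
`y' = -ℓ y + D` and lets the perturbation tend to zero.
-/

open Set
open scoped InnerProductSpace

section Rayleigh

open scoped MatrixOrder

lemma mul_norm_sq_le_re_inner_toEuclideanLin {𝕜 ι : Type*} [RCLike 𝕜] [Fintype ι] [DecidableEq ι]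
    {A : Matrix ι ι 𝕜} (hA : A.IsHermitian) {c : ℝ}
    (hc : c ∈ lowerBounds (range hA.eigenvalues)) (v : EuclideanSpace 𝕜 ι) :
    c * ‖v‖ ^ 2 ≤ RCLike.re ⟪v, toEuclideanLin A v⟫_𝕜 := by
  have hcA : algebraMap ℝ (Matrix ι ι 𝕜) c ≤ A :=
    algebraMap_le_of_le_spectrum (hA.spectrum_real_eq_range_eigenvalues ▸ hc) hA
  have hsub : toEuclideanLin (A - algebraMap ℝ (Matrix ι ι 𝕜) c) v =
      toEuclideanLin A v - (c : 𝕜) • v := by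
    rw [Algebra.algebraMap_eq_smul_one]
    ext i
    simp [toLpLin_apply, smul_mulVec, RCLike.real_smul_eq_coe_mul]
  have hnonneg := (isPositive_toEuclideanLin_iff.2 (le_iff.1 hcA)).re_inner_nonneg_right v
  rwa [hsub, inner_sub_right, inner_smul_right, map_sub, RCLike.re_ofReal_mul,
    inner_self_eq_norm_sq, sub_nonneg] at hnonneg

end Rayleigh

section Gronwall

lemma gronwallBound_pos {δ K ε x : ℝ} (hδ : 0 < δ) (hε : 0 ≤ ε) (hx : 0 ≤ x) :
    0 < gronwallBound δ K ε x := by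
  rcases lt_trichotomy K 0 with hK | rfl | hK
  · have hexp : Real.exp (K * x) ≤ 1 :=
      Real.exp_le_one_iff.2 (mul_nonpos_of_nonpos_of_nonneg hK.le hx)
    rw [gronwallBound_of_K_ne_0 hK.ne]
    exact add_pos_of_pos_of_nonneg (by positivity) (mul_nonneg_of_nonpos_of_nonpos
      (div_nonpos_of_nonneg_of_nonpos hε hK.le) (sub_nonpos.2 hexp))
  · rw [gronwallBound_K0]
    positivity
  · calc 0 < δ := hδ
      _ = gronwallBound δ K ε 0 := (gronwallBound_x0 δ K ε).symm
      _ ≤ gronwallBound δ K ε x := gronwallBound_mono hδ.le hε hK.le hx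

lemma continuous_gronwallBound_δ_ε (K x : ℝ) :
    Continuous fun p : ℝ × ℝ => gronwallBound p.1 K p.2 x := by
  unfold gronwallBound
  split_ifs <;> fun_prop

variable {E : Type*} [NormedAddCommGroup E] [InnerProductSpace ℝ E] {f f' : ℝ → E} {a b : ℝ}

lemma norm_le_of_inner_deriv_right_lt_deriv_boundary (hf : ContinuousOn f (Icc a b))
    (hf' : ∀ x ∈ Ico a b, HasDerivWithinAt f (f' x) (Ici x) x) {B B' : ℝ → ℝ}
    (hB₀ : ∀ x ∈ Icc a b, 0 ≤ B x) (ha : ‖f a‖ ≤ B a) (hB : ContinuousOn B (Icc a b))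
    (hB' : ∀ x ∈ Ico a b, HasDerivWithinAt B (B' x) (Ici x) x)
    (bound : ∀ x ∈ Ico a b, ‖f x‖ = B x → ⟪f x, f' x⟫_ℝ < B x * B' x) :
    ∀ x ∈ Icc a b, ‖f x‖ ≤ B x := by
  intro x hx
  refine le_of_sq_le_sq ?_ (hB₀ x hx)
  refine image_le_of_deriv_right_lt_deriv_boundary' (f := fun y => ‖f y‖ ^ 2)
    (B := fun y => B y ^ 2) (hf.norm.pow 2) (fun y hy => (hf' y hy).norm_sq)
    (pow_le_pow_left₀ (norm_nonneg _) ha 2) (hB.pow 2) (fun y hy => (hB' y hy).pow 2)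
    (fun y hy heq => ?_) hx
  have hnorm : ‖f y‖ = B y :=
    (sq_eq_sq₀ (norm_nonneg _) (hB₀ y (Ico_subset_Icc_self hy))).1 heq
  simpa [mul_assoc] using bound y hy hnorm

theorem norm_le_gronwallBound_of_inner_deriv_right_le {δ K ε : ℝ} (hε : 0 ≤ ε)
    (hf : ContinuousOn f (Icc a b)) (hf' : ∀ x ∈ Ico a b, HasDerivWithinAt f (f' x) (Ici x) x)
    (ha : ‖f a‖ ≤ δ) (bound : ∀ x ∈ Ico a b, ⟪f x, f' x⟫_ℝ ≤ K * ‖f x‖ ^ 2 + ε * ‖f x‖) :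
    ∀ x ∈ Icc a b, ‖f x‖ ≤ gronwallBound δ K ε (x - a) := by
  intro x hx
  have hstrict : ∀ η > 0, ‖f x‖ ≤ gronwallBound (δ + η) K (ε + η) (x - a) := by
    intro η hη
    set B : ℝ → ℝ := fun y => gronwallBound (δ + η) K (ε + η) (y - a)
    have hB_pos : ∀ y, a ≤ y → 0 < B y := fun y hy =>
      gronwallBound_pos (by linarith [norm_nonneg (f a)]) (by positivity) (sub_nonneg.2 hy)
    have hB' : ∀ y, HasDerivAt B (K * B y + (ε + η)) y := fun y =>
      hasDerivAt_gronwallBound_shift (δ + η) K (ε + η) y a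
    refine norm_le_of_inner_deriv_right_lt_deriv_boundary hf hf' (fun y hy => (hB_pos y hy.1).le)
      ?_ (fun y _ => (hB' y).continuousAt.continuousWithinAt)
      (fun y _ => (hB' y).hasDerivWithinAt) (fun y hy hfB => ?_) x hx
    · simp only [B, sub_self, gronwallBound_x0]
      linarith
    · calc ⟪f y, f' y⟫_ℝ ≤ K * B y ^ 2 + ε * B y := hfB ▸ bound y hy
        _ < K * B y ^ 2 + ε * B y + η * B y := lt_add_of_pos_right _ (mul_pos hη (hB_pos y hy.1))
        _ = B y * (K * B y + (ε + η)) := by ring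
  have hcont : Continuous fun η => gronwallBound (δ + η) K (ε + η) (x - a) :=
    (continuous_gronwallBound_δ_ε K (x - a)).comp
      (f := fun η => (δ + η, ε + η)) (by fun_prop)
  simpa only [add_zero] using ge_of_tendsto (hcont.continuousWithinAt (s := Ioi 0) (x := 0))
    (eventually_mem_nhdsWithin.mono hstrict)

end Gronwall

section Observer

lemma hasDerivWithinAt_observer_error {𝕜 E : Type*} [NontriviallyNormedField 𝕜]
    [NormedAddCommGroup E] [NormedSpace 𝕜 E] (L : E →L[𝕜] E) {x ξ d : 𝕜 → E} {d' F : E}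
    {s : Set 𝕜} {t : 𝕜} (hd : HasDerivWithinAt d d' s t)
    (hx : HasDerivWithinAt x (F + d t) s t)
    (hξ : HasDerivWithinAt ξ (-(L (ξ t + L (x t) + F))) s t) :
    HasDerivWithinAt (fun u => L (x u) + ξ u - d u) (-(L (L (x t) + ξ t - d t)) - d') s t := by
  refine (((L.hasFDerivAt.comp_hasDerivWithinAt t hx).add hξ).sub hd).congr_deriv ?_
  simp only [map_add, map_sub]
  abel

variable {E : Type*} [NormedAddCommGroup E] [InnerProductSpace ℝ E]

lemma inner_neg_sub_le_of_le_inner {ℓ D : ℝ} {e v w : E}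
    (hv : ℓ * ‖e‖ ^ 2 ≤ ⟪e, v⟫_ℝ) (hw : ‖w‖ ≤ D) :
    ⟪e, -v - w⟫_ℝ ≤ -ℓ * ‖e‖ ^ 2 + D * ‖e‖ := by
  have hdist : -⟪e, w⟫_ℝ ≤ D * ‖e‖ :=
    calc -⟪e, w⟫_ℝ ≤ ‖e‖ * ‖w‖ := (neg_le_abs _).trans (abs_real_inner_le_norm e w)
      _ ≤ ‖e‖ * D := by gcongr
      _ = D * ‖e‖ := mul_comm _ _
  rw [inner_sub_right, inner_neg_right]
  linarith

theorem first_order_observer_error_bound_general (L : E →L[ℝ] E) {ℓ : ℝ} (hℓ : ℓ ≠ 0)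
    (hL : ∀ v, ℓ * ‖v‖ ^ 2 ≤ ⟪v, L v⟫_ℝ) {x ξ d d' F dhat : ℝ → E}
    (hd : ∀ t, 0 ≤ t → HasDerivWithinAt d (d' t) (Ici 0) t)
    (hx : ∀ t, 0 ≤ t → HasDerivWithinAt x (F t + d t) (Ici 0) t)
    (hξ : ∀ t, 0 ≤ t → HasDerivWithinAt ξ (-(L (ξ t + L (x t) + F t))) (Ici 0) t)
    (hdhat : ∀ t, 0 ≤ t → dhat t = L (x t) + ξ t)
    {D : ℝ} (hD : ∀ t, 0 ≤ t → ‖d' t‖ ≤ D) {t : ℝ} (ht : 0 ≤ t) :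
    ‖dhat t - d t‖ ≤
      Real.exp (-ℓ * t) * ‖dhat 0 - d 0‖ + (D / ℓ) * (1 - Real.exp (-ℓ * t)) := by
  set e : ℝ → E := fun u => L (x u) + ξ u - d u
  have he : ∀ u, 0 ≤ u → HasDerivWithinAt e (-(L (e u)) - d' u) (Ici 0) u := fun u hu =>
    hasDerivWithinAt_observer_error L (hd u hu) (hx u hu) (hξ u hu)
  have hgronwall : ‖e t‖ ≤ gronwallBound ‖e 0‖ (-ℓ) D (t - 0) :=
    norm_le_gronwallBound_of_inner_deriv_right_le ((norm_nonneg _).trans (hD 0 le_rfl))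
      (fun u hu => (he u hu.1).continuousWithinAt.mono Icc_subset_Ici_self)
      (fun u hu => (he u hu.1).mono (Ici_subset_Ici.2 hu.1)) le_rfl
      (fun u hu => inner_neg_sub_le_of_le_inner (hL (e u)) (hD u hu.1)) t (right_mem_Icc.2 ht)
  rw [hdhat t ht, hdhat 0 le_rfl]
  refine hgronwall.trans_eq ?_
  rw [sub_zero, gronwallBound_of_K_ne_0 (neg_ne_zero.2 hℓ)]
  ring

end Observer

/-- First-order disturbance observer (the special case of the paper's
feedback-calibration mechanism with `d_model = 0`): for `x' = F + d`,
`ξ' = −L(ξ + L x + F)`, `d̂ = L x + ξ`, with `L` symmetric positive definite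
with smallest eigenvalue `ℓ > 0` and `‖d'(t)‖ ≤ D` for `t ≥ 0`,
`‖d̂(t) − d(t)‖ ≤ e^{−ℓ t}‖d̂(0) − d(0)‖ + (D/ℓ)(1 − e^{−ℓ t})`. -/
theorem first_order_observer_error_bound
    {n : ℕ} (L : Matrix (Fin n) (Fin n) ℝ)
    (hLsymm : L.IsSymm) (hLpd : L.PosDef)
    (ℓ : ℝ) (hℓ : 0 < ℓ)
    (hmin : IsLeast (Set.range hLpd.isHermitian.eigenvalues) ℓ)
    (x ξ d d' F dhat : ℝ → EuclideanSpace ℝ (Fin n))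
    (hd : ∀ t, HasDerivAt d (d' t) t)
    (hx : ∀ t, HasDerivAt x (F t + d t) t)
    (hξ : ∀ t, HasDerivAt ξ
      (-(Matrix.toEuclideanLin L (ξ t + Matrix.toEuclideanLin L (x t) + F t))) t)
    (hdhat : ∀ t, dhat t = Matrix.toEuclideanLin L (x t) + ξ t)
    (D : ℝ) (hD : ∀ t, 0 ≤ t → ‖d' t‖ ≤ D) :
    ∀ t, 0 ≤ t → ‖dhat t - d t‖ ≤
      Real.exp (-ℓ * t) * ‖dhat 0 - d 0‖ + (D / ℓ) * (1 - Real.exp (-ℓ * t)) := by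
  intro t ht
  exact first_order_observer_error_bound_general (Matrix.toEuclideanLin L).toContinuousLinearMap
    hℓ.ne' (mul_norm_sq_le_re_inner_toEuclideanLin hLpd.isHermitian hmin.2)
    (fun t _ => (hd t).hasDerivWithinAt) (fun t _ => (hx t).hasDerivWithinAt)
    (fun t _ => (hξ t).hasDerivWithinAt) (fun t _ => hdhat t) hD ht
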